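/- arXiv:1101.1717 — 2 statements merged into one kernel-verified Lean document; each statement's English description precedes it below -/
import Mathlib

section
/- The von Neumann Holevo quantity is monotone under quantum channels: for every quantum channel 𝓔 given by Kraus operators, all probability weights p_j (p_j ≥ 0, ∑_j p_j = 1) and all density matrices ρ_j on ℂ^n (j ∈ Fin k), S(∑_j p_j 𝓔(ρ_j)) − ∑_j p_j S(𝓔(ρ_j)) ≤ S(∑_j p_j ρ_j) − ∑_j p_j S(ρ_j). -/
open scoped Kronecker
open Finset Matrix
open scoped ComplexOrder

noncomputable section

/-- A density matrix: positive semidefinite with unit trace. -/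
def IsDensity {d : Type} [Fintype d] [DecidableEq d] (ρ : Matrix d d ℂ) : Prop :=
  ρ.PosSemidef ∧ ρ.trace = 1

/-- An entropy family: a real number assigned to every square complex matrix of
every finite dimension. -/
def EntropyFamily : Type 1 :=
  ∀ (d : Type) [Fintype d] [DecidableEq d], Matrix d d ℂ → ℝ

/-- Concavity of an entropy family. -/
def EntropyFamily.Concave (S : EntropyFamily) : Prop :=
  ∀ (d : Type) [Fintype d] [DecidableEq d] (k : ℕ) (p : Fin k → ℝ)
    (ρ : Fin k → Matrix d d ℂ),
    (∀ j, 0 ≤ p j) → ∑ j, p j = 1 → (∀ j, IsDensity (ρ j)) →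
    ∑ j, p j * S d (ρ j) ≤ S d (∑ j, (p j : ℂ) • ρ j)

/-- The entropy family depends only on the nonzero spectrum: `S (A Aᴴ) = S (Aᴴ A)`. -/
def EntropyFamily.SpectrumDep (S : EntropyFamily) : Prop :=
  ∀ (d e : Type) [Fintype d] [DecidableEq d] [Fintype e] [DecidableEq e]
    (A : Matrix d e ℂ), S d (A * Aᴴ) = S e (Aᴴ * A)

/-- Partial trace over the first tensor factor. -/
def trA {da db : Type} [Fintype da] (ρ : Matrix (da × db) (da × db) ℂ) :
    Matrix db db ℂ :=
  Matrix.of fun j j' => ∑ i, ρ (i, j) (i, j')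

/-- Partial trace over the second tensor factor. -/
def trB {da db : Type} [Fintype db] (ρ : Matrix (da × db) (da × db) ℂ) :
    Matrix da da ℂ :=
  Matrix.of fun i i' => ∑ j, ρ (i, j) (i', j)

/-- A POVM: a finite family of positive semidefinite matrices summing to `1`. -/
def IsPOVM {d : Type} [Fintype d] [DecidableEq d] {k : ℕ}
    (P : Fin k → Matrix d d ℂ) : Prop :=
  (∀ j, (P j).PosSemidef) ∧ ∑ j, P j = 1

/-- Probability of POVM outcome `P` on the first factor: `Tr((P ⊗ I) ρ)`. -/
def prob {da db : Type} [Fintype da] [Fintype db] [DecidableEq da] [DecidableEq db]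
    (P : Matrix da da ℂ) (ρ : Matrix (da × db) (da × db) ℂ) : ℝ :=
  (((P ⊗ₖ (1 : Matrix db db ℂ)) * ρ).trace).re

/-- Conditional state on the second factor given POVM outcome `P`. -/
def condB {da db : Type} [Fintype da] [Fintype db] [DecidableEq da] [DecidableEq db]
    (P : Matrix da da ℂ) (ρ : Matrix (da × db) (da × db) ℂ) : Matrix db db ℂ :=
  (((prob P ρ)⁻¹ : ℝ) : ℂ) • trA ((P ⊗ₖ (1 : Matrix db db ℂ)) * ρ)

/-- The Holevo quantity `χ(P, b)`. -/
def holevoB (S : EntropyFamily) {da db : Type} [Fintype da] [DecidableEq da]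
    [Fintype db] [DecidableEq db] {k : ℕ} (P : Fin k → Matrix da da ℂ)
    (ρ : Matrix (da × db) (da × db) ℂ) : ℝ :=
  S db (trA ρ) -
    ∑ j ∈ univ.filter (fun j => prob (P j) ρ ≠ 0),
      prob (P j) ρ * S db (condB (P j) ρ)

/-- Eigenvalues of a Hermitian matrix (junk value `0` if not Hermitian). -/
def eigs {d : Type} [Fintype d] [DecidableEq d] (X : Matrix d d ℂ) : d → ℝ :=
  if h : X.IsHermitian then h.eigenvalues else 0

/-- von Neumann entropy `S(ρ) = ∑ᵢ (−λᵢ log λᵢ)`. -/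
def vN {d : Type} [Fintype d] [DecidableEq d] (ρ : Matrix d d ℂ) : ℝ :=
  ∑ i, Real.negMulLog (eigs ρ i)

/-- von Neumann entropy as an entropy family. -/
def vNF : EntropyFamily := fun d _ _ ρ => vN ρ

/-- Quadratic entropy `S_Q(ρ) = 1 − Re Tr(ρ²)`. -/
def SQ {d : Type} [Fintype d] (ρ : Matrix d d ℂ) : ℝ := 1 - ((ρ * ρ).trace).re

/-- Quadratic entropy as an entropy family. -/
def SQF : EntropyFamily := fun d _ _ ρ => SQ ρ

/-- The outer product `ψ ψᴴ`. -/
def outer {d : Type} (ψ : d → ℂ) : Matrix d d ℂ := Matrix.vecMulVec ψ (star ψ)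

/-- A unit vector. -/
def UnitVec {d : Type} [Fintype d] (ψ : d → ℂ) : Prop := ∑ i, ‖ψ i‖ ^ 2 = 1

/-- Kraus operators of a quantum channel: `∑ᵢ Kᵢᴴ Kᵢ = 1`. -/
def IsKraus {n r t : ℕ} (K : Fin t → Matrix (Fin r) (Fin n) ℂ) : Prop :=
  ∑ i, (K i)ᴴ * K i = 1

/-- Action of the quantum channel with Kraus operators `K`. -/
def channel {n r t : ℕ} (K : Fin t → Matrix (Fin r) (Fin n) ℂ)
    (ρ : Matrix (Fin n) (Fin n) ℂ) : Matrix (Fin r) (Fin r) ℂ :=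
  ∑ i, K i * ρ * (K i)ᴴ

/-- Conditional joint state after a POVM element with square root `Q` and
outcome probability `p`: `(1/p) (Q ⊗ I) ρ (Q ⊗ I)`. -/
def condJoint {da db : Type} [Fintype da] [Fintype db] [DecidableEq da]
    [DecidableEq db] (Q : Matrix da da ℂ) (p : ℝ)
    (ρ : Matrix (da × db) (da × db) ℂ) : Matrix (da × db) (da × db) ℂ :=
  ((p⁻¹ : ℝ) : ℂ) • ((Q ⊗ₖ (1 : Matrix db db ℂ)) * ρ * (Q ⊗ₖ (1 : Matrix db db ℂ)))

/-- Tsallis entropy with parameter `q`. -/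
def tsallis (q : ℝ) {d : Type} [Fintype d] [DecidableEq d]
    (ρ : Matrix d d ℂ) : ℝ :=
  ((∑ i, eigs ρ i ^ q) - 1) / (1 - q)

/-- Rényi entropy with parameter `q`. -/
def renyi (q : ℝ) {d : Type} [Fintype d] [DecidableEq d]
    (ρ : Matrix d d ℂ) : ℝ :=
  (1 / (1 - q)) * Real.log (∑ i, eigs ρ i ^ q)

/-!
Write `σ = ∑ⱼ pⱼ ρⱼ`. The Holevo quantity is the average `∑ⱼ pⱼ D(ρⱼ ‖ σ)` of relative entropies, so
its monotonicity is the data-processing inequality for `D`. For the latter, expanding in the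
eigenbases of `ρ` and `σ` turns `D(ρ ‖ σ)` into the classical relative entropy of the
Nussbaum–Szkoła weights `P, Q`, which, up to a divergent term depending on `∑ P = Tr ρ` only, is the
integral over `s > 0` of `∑ P² / (Q + s P)`. By completing the square, this integrand is the maximum
over matrices `Y` of `2 Re Tr ρ Y - s Tr ρ Y Yᴴ - Tr σ Yᴴ Y`. If `Φ` is a channel with adjoint
`Φ*`, then by the Kadison–Schwarz inequality for `Φ*` the value at `Y` of the form of `Φ(ρ), Φ(σ)`
is at most the value at `Φ*(Y)` of the form of `ρ, σ`.
-/

open scoped MatrixOrder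

section KrausMap

variable {m n κ : Type*} [Fintype n] [Fintype κ]

/-- The completely positive map `X ↦ ∑ᵢ Kᵢ X Kᵢᴴ` with Kraus operators `K`. Its adjoint for the
trace pairing is the completely positive map with Kraus operators `Kᵢᴴ`. -/
def krausMap (K : κ → Matrix m n ℂ) : Matrix n n ℂ →ₗ[ℂ] Matrix m m ℂ where
  toFun X := ∑ i, K i * X * (K i)ᴴ
  map_add' X Y := by simp only [Matrix.mul_add, Matrix.add_mul, sum_add_distrib]
  map_smul' c X := by
    simp only [Matrix.mul_smul, Matrix.smul_mul, smul_sum, RingHom.id_apply]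

lemma krausMap_apply (K : κ → Matrix m n ℂ) (X : Matrix n n ℂ) :
    krausMap K X = ∑ i, K i * X * (K i)ᴴ := rfl

lemma krausMap_conjTranspose (K : κ → Matrix m n ℂ) (X : Matrix n n ℂ) :
    krausMap K Xᴴ = (krausMap K X)ᴴ := by
  simp [krausMap_apply, conjTranspose_sum, Matrix.mul_assoc]

lemma posSemidef_krausMap [Finite m] (K : κ → Matrix m n ℂ) {X : Matrix n n ℂ} (hX : X.PosSemidef) :
    (krausMap K X).PosSemidef :=
  posSemidef_sum _ fun i _ => hX.mul_mul_conjTranspose_same (K i)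

lemma krausMap_mono [Finite m] (K : κ → Matrix m n ℂ) : Monotone (krausMap K) := fun X Y hXY => by
  rw [Matrix.le_iff, ← map_sub]
  exact posSemidef_krausMap K hXY

variable [Fintype m]

lemma trace_krausMap_mul (K : κ → Matrix m n ℂ) (X : Matrix n n ℂ) (Y : Matrix m m ℂ) :
    (krausMap K X * Y).trace = (X * krausMap (fun i => (K i)ᴴ) Y).trace := by
  simp only [krausMap_apply, Matrix.sum_mul, Matrix.mul_sum, trace_sum]
  refine sum_congr rfl fun i _ => ?_
  rw [conjTranspose_conjTranspose, Matrix.mul_assoc, Matrix.mul_assoc, trace_mul_comm]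
  simp only [Matrix.mul_assoc]

lemma trace_krausMap [DecidableEq n] {K : κ → Matrix m n ℂ} (hK : ∑ i, (K i)ᴴ * K i = 1)
    (X : Matrix n n ℂ) : (krausMap K X).trace = X.trace := by
  classical
  have hdual : krausMap (fun i => (K i)ᴴ) (1 : Matrix m m ℂ) = 1 := by simpa [krausMap_apply]
  simpa [hdual] using trace_krausMap_mul K X 1

/-- The **Kadison–Schwarz inequality** for a unital Kraus map `Φ`: the difference of the two sides
is `∑ᵢ (Kᵢ Z - Φ(Z) Kᵢ) (Kᵢ Z - Φ(Z) Kᵢ)ᴴ`. -/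
lemma krausMap_mul_conjTranspose_le [DecidableEq m] {K : κ → Matrix m n ℂ}
    (hK : ∑ i, K i * (K i)ᴴ = 1) (Z : Matrix n n ℂ) :
    krausMap K Z * (krausMap K Z)ᴴ ≤ krausMap K (Z * Zᴴ) := by
  set D := krausMap K Z
  have hDstar : Dᴴ = ∑ i, K i * Zᴴ * (K i)ᴴ := (krausMap_conjTranspose K Z).symm
  have hdiff : krausMap K (Z * Zᴴ) - D * Dᴴ =
      ∑ i, (K i * Z - D * K i) * (K i * Z - D * K i)ᴴ := by
    have hZD : ∑ i, K i * Z * (D * K i)ᴴ = D * Dᴴ := by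
      refine Eq.trans ?_ (congrArg (· * Dᴴ) (krausMap_apply K Z)).symm
      simp only [Matrix.sum_mul, conjTranspose_mul, Matrix.mul_assoc]
    have hDZ : ∑ i, D * K i * (K i * Z)ᴴ = D * Dᴴ := by
      rw [hDstar, Matrix.mul_sum]
      simp only [conjTranspose_mul, Matrix.mul_assoc]
    have hDD : ∑ i, D * K i * (D * K i)ᴴ = D * Dᴴ := by
      calc ∑ i, D * K i * (D * K i)ᴴ = D * (∑ i, K i * (K i)ᴴ) * Dᴴ := by
            simp only [conjTranspose_mul, Matrix.mul_sum, Matrix.sum_mul, Matrix.mul_assoc]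
        _ = D * Dᴴ := by rw [hK, Matrix.mul_one]
    have hZZ : ∑ i, K i * Z * (K i * Z)ᴴ = krausMap K (Z * Zᴴ) := by
      simp only [krausMap_apply, conjTranspose_mul, Matrix.mul_assoc]
    simp only [conjTranspose_sub, Matrix.sub_mul, Matrix.mul_sub, sum_sub_distrib,
      hZZ, hZD, hDZ, hDD, sub_self, sub_zero]
  rw [Matrix.le_iff, hdiff]
  exact posSemidef_sum _ fun i _ => posSemidef_self_mul_conjTranspose _

end KrausMap

lemma re_trace_mul_le_re_trace_mul {n : Type*} [Fintype n] {X A B : Matrix n n ℂ}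
    (hX : X.PosSemidef) (hAB : A ≤ B) : (X * A).trace.re ≤ (X * B).trace.re := by
  classical
  obtain ⟨C, rfl⟩ := CStarAlgebra.nonneg_iff_eq_star_mul_self.mp hX.nonneg
  have hpos : 0 ≤ (C * (B - A) * Cᴴ).trace :=
    (PosSemidef.mul_mul_conjTranspose_same hAB C).trace_nonneg
  rw [trace_mul_comm, ← Matrix.mul_assoc, Matrix.mul_sub, trace_sub] at hpos
  simpa [star_eq_conjTranspose] using (Complex.le_def.mp hpos).1

section ResolventForm

variable {m n κ : Type*} [Fintype m] [Fintype n] [Fintype κ]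

/-- The concave quadratic form in `Y` whose supremum is the trace of `ρ` against the solution `Y` of
`σ Yᴴ + s Yᴴ ρ = ρ`; integrating that supremum over `s` produces the relative entropy. -/
def resolventForm (s : ℝ) (ρ σ Y : Matrix n n ℂ) : ℝ :=
  2 * (ρ * Y).trace.re - s * (ρ * (Y * Yᴴ)).trace.re - (σ * (Yᴴ * Y)).trace.re

lemma resolventForm_krausMap_le [DecidableEq n] {K : κ → Matrix m n ℂ}
    (hK : ∑ i, (K i)ᴴ * K i = 1) {ρ σ : Matrix n n ℂ} (hρ : ρ.PosSemidef) (hσ : σ.PosSemidef)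
    {s : ℝ} (hs : 0 ≤ s) (Y : Matrix m m ℂ) :
    resolventForm s (krausMap K ρ) (krausMap K σ) Y ≤
      resolventForm s ρ σ (krausMap (fun i => (K i)ᴴ) Y) := by
  have hunital : ∑ i, (K i)ᴴ * ((K i)ᴴ)ᴴ = 1 := by simpa using hK
  have hY := krausMap_mul_conjTranspose_le hunital Y
  have hY' := krausMap_mul_conjTranspose_le hunital Yᴴ
  rw [krausMap_conjTranspose, conjTranspose_conjTranspose, conjTranspose_conjTranspose] at hY'
  simp only [resolventForm, trace_krausMap_mul]
  gcongr 2 * _ - s * ?_ - ?_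
  · exact re_trace_mul_le_re_trace_mul hρ hY
  · exact re_trace_mul_le_re_trace_mul hσ hY'

end ResolventForm

section ClassicalRelativeEntropy

open Filter Topology

variable {ι κ : Type*} [Fintype ι] [Fintype κ]

/-- The relative entropy of two families of nonnegative weights on a finite type. It is the usual
one provided `p` vanishes wherever `q` does. -/
def klSum (p q : ι → ℝ) : ℝ := ∑ i, p i * (Real.log (p i) - Real.log (q i))

/-- The integrand at `s` of the integral over `[0, ∞)` representing `klSum p q`, up to a divergent
term depending on `∑ᵢ pᵢ` only. -/
def resolventSum (s : ℝ) (p q : ι → ℝ) : ℝ := ∑ i, p i ^ 2 / (q i + s * p i)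

/-- The integral of `resolventSum s p q` over `s ∈ [0, T]`. -/
def truncKLSum (T : ℝ) (p q : ι → ℝ) : ℝ :=
  ∑ i, p i * (Real.log (q i + T * p i) - Real.log (q i))

lemma hasDerivAt_truncKLSum {p q : ι → ℝ} (hp : 0 ≤ p) (hq : 0 ≤ q)
    (hpq : ∀ i, q i = 0 → p i = 0) {T : ℝ} (hT : 0 ≤ T) :
    HasDerivAt (fun T => truncKLSum T p q) (resolventSum T p q) T := by
  refine HasDerivAt.fun_sum fun i _ => ?_
  rcases (hq i).eq_or_lt with hi | hi
  · simpa [hpq i hi.symm] using hasDerivAt_const T (0 : ℝ)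
  · have hpos : q i + T * p i ≠ 0 := (add_pos_of_pos_of_nonneg hi (mul_nonneg hT (hp i))).ne'
    have hlin : HasDerivAt (fun T => q i + T * p i) (p i) T := by
      simpa using ((hasDerivAt_id T).mul_const (p i)).const_add (q i)
    exact (((hlin.log hpos).sub_const _).const_mul (p i)).congr_deriv (by ring)

lemma tendsto_truncKLSum_sub_log {p q : ι → ℝ} (hp : 0 ≤ p) (hq : 0 ≤ q) :
    Tendsto (fun T => truncKLSum T p q - (∑ i, p i) * Real.log T) atTop (𝓝 (klSum p q)) := by
  simp only [truncKLSum, sum_mul, ← sum_sub_distrib]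
  refine tendsto_finsetSum _ fun i _ => ?_
  rcases (hp i).eq_or_lt with hi | hi
  · simp [← hi]
  have hlim : Tendsto (fun T : ℝ => q i * T⁻¹ + p i) atTop (𝓝 (p i)) := by
    simpa using (tendsto_inv_atTop_zero.const_mul (q i)).add_const (p i)
  refine (((hlim.log hi.ne').sub_const (Real.log (q i))).const_mul (p i)).congr' ?_
  filter_upwards [eventually_gt_atTop 0] with T hT
  have hsplit : q i + T * p i = T * (q i * T⁻¹ + p i) := by field_simp
  have hpos : 0 < q i * T⁻¹ + p i :=
    add_pos_of_nonneg_of_pos (mul_nonneg (hq i) (inv_nonneg.mpr hT.le)) hi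
  rw [hsplit, Real.log_mul hT.ne' hpos.ne']
  ring

lemma klSum_le_of_resolventSum_le {p q : ι → ℝ} {p' q' : κ → ℝ}
    (hp : 0 ≤ p) (hq : 0 ≤ q) (hpq : ∀ i, q i = 0 → p i = 0)
    (hp' : 0 ≤ p') (hq' : 0 ≤ q') (hpq' : ∀ i, q' i = 0 → p' i = 0)
    (hsum : ∑ i, p' i = ∑ i, p i)
    (hle : ∀ s, 0 < s → resolventSum s p' q' ≤ resolventSum s p q) :
    klSum p' q' ≤ klSum p q := by
  have hderiv (T : ℝ) (hT : 0 ≤ T) := (hasDerivAt_truncKLSum hp hq hpq hT).sub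
    (hasDerivAt_truncKLSum hp' hq' hpq' hT)
  have hmono : MonotoneOn (fun T => truncKLSum T p q - truncKLSum T p' q') (Set.Ici 0) := by
    refine monotoneOn_of_hasDerivWithinAt_nonneg (convex_Ici 0)
      (fun T hT => (hderiv T hT).continuousAt.continuousWithinAt)
      (fun T hT => (hderiv T (interior_subset hT)).hasDerivWithinAt) fun T hT => ?_
    exact sub_nonneg.mpr (hle T (by simpa using hT))
  refine le_of_tendsto_of_tendsto (tendsto_truncKLSum_sub_log hp' hq')
    (tendsto_truncKLSum_sub_log hp hq) ?_
  filter_upwards [eventually_ge_atTop 0] with T hT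
  have h0T := hmono Set.self_mem_Ici hT hT
  simp only [truncKLSum, zero_mul, add_zero, sub_self, mul_zero, sum_const_zero] at h0T
  rw [hsum]
  exact sub_le_sub_right (sub_nonneg.mp h0T) _

end ClassicalRelativeEntropy

section EigenCoeff

variable {m n : Type*} [Fintype m] [DecidableEq m] [Fintype n] [DecidableEq n]
  {ρ : Matrix n n ℂ} {σ : Matrix m m ℂ}

/-- The matrix coefficients `⟨uᵢ, Y vⱼ⟩` of `Y` in the eigenbases `u` of `ρ` and `v` of `σ`. -/
def eigenCoeff (hρ : ρ.IsHermitian) (hσ : σ.IsHermitian) (Y : Matrix n m ℂ) : Matrix n m ℂ :=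
  star (hρ.eigenvectorUnitary : Matrix n n ℂ) * Y * (hσ.eigenvectorUnitary : Matrix m m ℂ)

lemma eigenCoeff_surjective (hρ : ρ.IsHermitian) (hσ : σ.IsHermitian) :
    Function.Surjective (eigenCoeff hρ hσ) := fun Z => by
  refine ⟨(hρ.eigenvectorUnitary : Matrix n n ℂ) * Z *
    star (hσ.eigenvectorUnitary : Matrix m m ℂ), ?_⟩
  rw [eigenCoeff, ← Matrix.mul_assoc, ← Matrix.mul_assoc, Unitary.coe_star_mul_self,
    Matrix.one_mul, Matrix.mul_assoc, Unitary.coe_star_mul_self, Matrix.mul_one]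

lemma trace_cfc_mul_mul_cfc_mul_conjTranspose (hρ : ρ.IsHermitian) (hσ : σ.IsHermitian)
    (f g : ℝ → ℝ) (A B : Matrix n m ℂ) :
    (cfc f ρ * A * cfc g σ * Bᴴ).trace =
      ∑ ij : n × m, ((f (hρ.eigenvalues ij.1) * g (hσ.eigenvalues ij.2) : ℝ) : ℂ) *
        (star (eigenCoeff hρ hσ B ij.1 ij.2) * eigenCoeff hρ hσ A ij.1 ij.2) := by
  have hconj : (cfc f ρ * A * cfc g σ * Bᴴ).trace =
      (diagonal (fun i => (f (hρ.eigenvalues i) : ℂ)) * eigenCoeff hρ hσ A *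
        diagonal (fun j => (g (hσ.eigenvalues j) : ℂ)) * (eigenCoeff hρ hσ B)ᴴ).trace := by
    rw [hρ.cfc_eq, hσ.cfc_eq, IsHermitian.cfc, IsHermitian.cfc, Unitary.conjStarAlgAut_apply,
      Unitary.conjStarAlgAut_apply]
    simp only [eigenCoeff, conjTranspose_mul, star_eq_conjTranspose, conjTranspose_conjTranspose]
    simp only [Matrix.mul_assoc]
    rw [trace_mul_comm]
    simp only [Matrix.mul_assoc]
    rfl
  rw [hconj, Fintype.sum_prod_type, Matrix.trace]
  refine sum_congr rfl fun i _ => ?_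
  rw [diag_apply, Matrix.mul_apply]
  refine sum_congr rfl fun j _ => ?_
  rw [mul_diagonal, diagonal_mul, conjTranspose_apply]
  push_cast
  ring

end EigenCoeff

lemma mul_cfc_eq_cfc_mul {n : Type*} [Fintype n] [DecidableEq n] {ρ : Matrix n n ℂ}
    (hρ : ρ.IsHermitian) (f : ℝ → ℝ) : ρ * cfc f ρ = cfc (fun x => x * f x) ρ := by
  rw [cfc_mul (fun x => x) f ρ (Matrix.finite_real_spectrum.continuousOn _)
    (Matrix.finite_real_spectrum.continuousOn _), cfc_id' ℝ ρ hρ.isSelfAdjoint]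

section NussbaumSzkola

variable {n : Type*} [Fintype n] [DecidableEq n] {ρ σ : Matrix n n ℂ}

/-- The first Nussbaum–Szkoła distribution `(i, j) ↦ λᵢ |⟨uᵢ, vⱼ⟩|²` of the pair `ρ, σ`, where
`λ`, `μ` are the eigenvalues and `u`, `v` the eigenbases of `ρ`, `σ`. -/
def nussbaumSzkolaFst (hρ : ρ.IsHermitian) (hσ : σ.IsHermitian) (ij : n × n) : ℝ :=
  hρ.eigenvalues ij.1 * Complex.normSq (eigenCoeff hρ hσ 1 ij.1 ij.2)

/-- The second Nussbaum–Szkoła distribution `(i, j) ↦ μⱼ |⟨uᵢ, vⱼ⟩|²` of the pair `ρ, σ`, where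
`λ`, `μ` are the eigenvalues and `u`, `v` the eigenbases of `ρ`, `σ`. -/
def nussbaumSzkolaSnd (hρ : ρ.IsHermitian) (hσ : σ.IsHermitian) (ij : n × n) : ℝ :=
  hσ.eigenvalues ij.2 * Complex.normSq (eigenCoeff hρ hσ 1 ij.1 ij.2)

lemma re_trace_cfc_mul_cfc (hρ : ρ.IsHermitian) (hσ : σ.IsHermitian) (f g : ℝ → ℝ) :
    (cfc f ρ * cfc g σ).trace.re = ∑ ij : n × n, f (hρ.eigenvalues ij.1) *
      g (hσ.eigenvalues ij.2) * Complex.normSq (eigenCoeff hρ hσ 1 ij.1 ij.2) := by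
  have h := trace_cfc_mul_mul_cfc_mul_conjTranspose hρ hσ f g 1 1
  rw [Matrix.mul_one, conjTranspose_one, Matrix.mul_one] at h
  rw [h, Complex.re_sum]
  refine sum_congr rfl fun ij _ => ?_
  rw [Complex.re_ofReal_mul, Complex.star_def, ← Complex.normSq_eq_conj_mul_self,
    Complex.ofReal_re]

lemma re_trace_mul_cfc_eq_sum_nussbaumSzkolaFst (hρ : ρ.IsHermitian) (hσ : σ.IsHermitian)
    (g : ℝ → ℝ) : (ρ * cfc g σ).trace.re =
      ∑ ij : n × n, nussbaumSzkolaFst hρ hσ ij * g (hσ.eigenvalues ij.2) := by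
  have h := re_trace_cfc_mul_cfc hρ hσ id g
  rw [cfc_id ℝ ρ hρ.isSelfAdjoint] at h
  exact h.trans (sum_congr rfl fun ij _ => mul_right_comm _ _ _)

lemma nussbaumSzkolaFst_nonneg (hρ : ρ.PosSemidef) (hσ : σ.IsHermitian) :
    0 ≤ nussbaumSzkolaFst hρ.1 hσ :=
  fun _ => mul_nonneg (hρ.eigenvalues_nonneg _) (Complex.normSq_nonneg _)

lemma nussbaumSzkolaSnd_nonneg (hρ : ρ.IsHermitian) (hσ : σ.PosSemidef) :
    0 ≤ nussbaumSzkolaSnd hρ hσ.1 :=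
  fun _ => mul_nonneg (hσ.eigenvalues_nonneg _) (Complex.normSq_nonneg _)

lemma sum_nussbaumSzkolaFst (hρ : ρ.IsHermitian) (hσ : σ.IsHermitian) :
    ∑ ij, nussbaumSzkolaFst hρ hσ ij = ρ.trace.re := by
  have h := re_trace_mul_cfc_eq_sum_nussbaumSzkolaFst hρ hσ 1
  rw [cfc_one ℝ σ hσ.isSelfAdjoint, Matrix.mul_one] at h
  simpa using h.symm

lemma resolventForm_eq_sum (hρ : ρ.IsHermitian) (hσ : σ.IsHermitian) (s : ℝ) (Y : Matrix n n ℂ) :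
    resolventForm s ρ σ Y = ∑ ij : n × n,
      (2 * hρ.eigenvalues ij.1 *
          (star (eigenCoeff hρ hσ 1 ij.1 ij.2) * eigenCoeff hρ hσ Y ij.1 ij.2).re -
        (hσ.eigenvalues ij.2 + s * hρ.eigenvalues ij.1) *
          Complex.normSq (eigenCoeff hρ hσ Y ij.1 ij.2)) := by
  have hlin := trace_cfc_mul_mul_cfc_mul_conjTranspose hρ hσ id 1 Y 1
  have hfst := trace_cfc_mul_mul_cfc_mul_conjTranspose hρ hσ id 1 Y Y
  have hsnd := trace_cfc_mul_mul_cfc_mul_conjTranspose hρ hσ 1 id Y Y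
  rw [cfc_id ℝ ρ hρ.isSelfAdjoint, cfc_one ℝ σ hσ.isSelfAdjoint, Matrix.mul_one] at hlin hfst
  rw [conjTranspose_one, Matrix.mul_one] at hlin
  rw [Matrix.mul_assoc] at hfst
  rw [cfc_one ℝ ρ hρ.isSelfAdjoint, cfc_id ℝ σ hσ.isSelfAdjoint, Matrix.one_mul,
    trace_mul_cycle, trace_mul_comm] at hsnd
  rw [resolventForm, hlin, hfst, hsnd]
  simp only [Complex.re_sum, Complex.re_ofReal_mul, mul_sum, ← sum_sub_distrib, Complex.star_def,
    ← Complex.normSq_eq_conj_mul_self, Complex.ofReal_re, id_eq, Pi.one_apply, mul_one, one_mul]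
  refine sum_congr rfl fun ij _ => ?_
  ring

/-- Completing the square; when `c = 0`, both quotients are `0`. -/
lemma two_mul_re_sub_mul_normSq {a c : ℝ} (h : c = 0 → a = 0) (x z : ℂ) :
    2 * a * (star x * z).re - c * Complex.normSq z =
      Complex.normSq x * (a ^ 2 / c) - c * Complex.normSq (z - (a / c : ℝ) * x) := by
  rcases eq_or_ne c 0 with rfl | hc
  · simp [h rfl]
  · simp only [Complex.normSq_apply, Complex.star_def, Complex.mul_re, Complex.mul_im,
      Complex.conj_re, Complex.conj_im, Complex.ofReal_re, Complex.ofReal_im, Complex.sub_re,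
      Complex.sub_im]
    field_simp
    ring

lemma resolventForm_eq_resolventSum_sub (hρ : ρ.PosSemidef) (hσ : σ.PosSemidef) {s : ℝ}
    (hs : 0 < s) (Y : Matrix n n ℂ) :
    resolventForm s ρ σ Y =
      resolventSum s (nussbaumSzkolaFst hρ.1 hσ.1) (nussbaumSzkolaSnd hρ.1 hσ.1) -
        ∑ ij : n × n, (hσ.1.eigenvalues ij.2 + s * hρ.1.eigenvalues ij.1) *
          Complex.normSq (eigenCoeff hρ.1 hσ.1 Y ij.1 ij.2 -
            (hρ.1.eigenvalues ij.1 / (hσ.1.eigenvalues ij.2 + s * hρ.1.eigenvalues ij.1) : ℝ) *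
              eigenCoeff hρ.1 hσ.1 1 ij.1 ij.2) := by
  rw [resolventForm_eq_sum hρ.1 hσ.1, resolventSum, ← sum_sub_distrib]
  refine sum_congr rfl fun ij _ => ?_
  have hzero (h : hσ.1.eigenvalues ij.2 + s * hρ.1.eigenvalues ij.1 = 0) :
      hρ.1.eigenvalues ij.1 = 0 := by
    have hmul := ((add_eq_zero_iff_of_nonneg (hσ.eigenvalues_nonneg _)
      (mul_nonneg hs.le (hρ.eigenvalues_nonneg _))).mp h).2
    exact (mul_eq_zero.mp hmul).resolve_left hs.ne'
  rw [two_mul_re_sub_mul_normSq hzero, nussbaumSzkolaFst, nussbaumSzkolaSnd]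
  congr 1
  rcases eq_or_ne (Complex.normSq (eigenCoeff hρ.1 hσ.1 1 ij.1 ij.2)) 0 with hw | hw
  · simp [hw]
  · rw [← mul_assoc, ← add_mul, mul_pow, sq (Complex.normSq _), ← mul_assoc,
      mul_div_mul_right _ _ hw]
    ring

lemma isGreatest_range_resolventForm (hρ : ρ.PosSemidef) (hσ : σ.PosSemidef) {s : ℝ}
    (hs : 0 < s) : IsGreatest (Set.range (resolventForm s ρ σ))
      (resolventSum s (nussbaumSzkolaFst hρ.1 hσ.1) (nussbaumSzkolaSnd hρ.1 hσ.1)) := by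
  constructor
  · obtain ⟨Y, hY⟩ := eigenCoeff_surjective hρ.1 hσ.1 (.of fun i j =>
      (hρ.1.eigenvalues i / (hσ.1.eigenvalues j + s * hρ.1.eigenvalues i) : ℝ) *
        eigenCoeff hρ.1 hσ.1 1 i j)
    refine ⟨Y, ?_⟩
    simp [resolventForm_eq_resolventSum_sub hρ hσ hs, hY]
  · rintro _ ⟨Y, rfl⟩
    rw [resolventForm_eq_resolventSum_sub hρ hσ hs]
    exact sub_le_self _ (sum_nonneg fun ij _ => mul_nonneg
      (add_nonneg (hσ.eigenvalues_nonneg _) (mul_nonneg hs.le (hρ.eigenvalues_nonneg _)))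
      (Complex.normSq_nonneg _))

lemma resolventSum_nussbaumSzkola_krausMap_le {m κ : Type*} [Fintype m] [DecidableEq m]
    [Fintype κ] {K : κ → Matrix m n ℂ} (hK : ∑ i, (K i)ᴴ * K i = 1)
    (hρ : ρ.PosSemidef) (hσ : σ.PosSemidef) {s : ℝ} (hs : 0 < s) :
    resolventSum s
        (nussbaumSzkolaFst (posSemidef_krausMap K hρ).1 (posSemidef_krausMap K hσ).1)
        (nussbaumSzkolaSnd (posSemidef_krausMap K hρ).1 (posSemidef_krausMap K hσ).1) ≤
      resolventSum s (nussbaumSzkolaFst hρ.1 hσ.1) (nussbaumSzkolaSnd hρ.1 hσ.1) := by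
  obtain ⟨Y, hY⟩ := (isGreatest_range_resolventForm (posSemidef_krausMap K hρ)
    (posSemidef_krausMap K hσ) hs).1
  rw [← hY]
  exact (resolventForm_krausMap_le hK hρ hσ hs.le Y).trans
    ((isGreatest_range_resolventForm hρ hσ hs).2 ⟨_, rfl⟩)

lemma nussbaumSzkolaFst_eq_zero_of_smul_le (hρ : ρ.PosSemidef) (hσ : σ.IsHermitian) {c : ℝ}
    (hc : 0 < c) (hle : (c : ℂ) • ρ ≤ σ) {ij : n × n}
    (hij : nussbaumSzkolaSnd hρ.1 hσ ij = 0) :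
    nussbaumSzkolaFst hρ.1 hσ ij = 0 := by
  rcases mul_eq_zero.mp hij with hμ | hw
  swap
  · rw [nussbaumSzkolaFst, hw, mul_zero]
  -- Test the domination against the projection onto the kernel of `σ`.
  set e : ℝ → ℝ := Pi.single 0 1
  have he (x : ℝ) : 0 ≤ e x := (Pi.single_nonneg.mpr zero_le_one : (0 : ℝ → ℝ) ≤ e) x
  have hker : (cfc e σ * σ).trace = 0 := by
    have hzero : (fun x => x * e x) = fun _ => 0 := by
      funext x
      rcases eq_or_ne x 0 with rfl | hx
      · exact zero_mul _
      · simp [e, hx]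
    rw [trace_mul_comm, mul_cfc_eq_cfc_mul hσ, hzero, cfc_const_zero, trace_zero]
  have hnonpos : c * (ρ * cfc e σ).trace.re ≤ 0 := by
    have h := re_trace_mul_le_re_trace_mul (cfc_nonneg fun x _ => he x : 0 ≤ cfc e σ).posSemidef hle
    rwa [hker, Matrix.mul_smul, trace_smul, trace_mul_comm, smul_eq_mul,
      Complex.re_ofReal_mul] at h
  have hterm (kl : n × n) : 0 ≤ nussbaumSzkolaFst hρ.1 hσ kl * e (hσ.eigenvalues kl.2) :=
    mul_nonneg (nussbaumSzkolaFst_nonneg hρ hσ kl) (he _)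
  rw [re_trace_mul_cfc_eq_sum_nussbaumSzkolaFst hρ.1 hσ] at hnonpos
  have hzero := (sum_eq_zero_iff_of_nonneg fun kl _ => hterm kl).mp <|
    (nonpos_of_mul_nonpos_right hnonpos hc).antisymm (sum_nonneg fun kl _ => hterm kl)
  simpa [e, hμ] using hzero ij (mem_univ ij)

end NussbaumSzkola

section RelativeEntropy

variable {n : Type*} [Fintype n] [DecidableEq n] {ρ σ : Matrix n n ℂ}

/-- The quantum relative entropy `Re Tr ρ (log ρ - log σ)`. As `Real.log 0 = 0`, it is the usual one
only when the support of `ρ` is contained in that of `σ`. -/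
def relEntropy (ρ σ : Matrix n n ℂ) : ℝ := (ρ * (cfc Real.log ρ - cfc Real.log σ)).trace.re

lemma relEntropy_eq_klSum (hρ : ρ.IsHermitian) (hσ : σ.IsHermitian)
    (hac : ∀ ij, nussbaumSzkolaSnd hρ hσ ij = 0 → nussbaumSzkolaFst hρ hσ ij = 0) :
    relEntropy ρ σ = klSum (nussbaumSzkolaFst hρ hσ) (nussbaumSzkolaSnd hρ hσ) := by
  have hself := re_trace_cfc_mul_cfc hρ hσ (fun x => x * Real.log x) 1
  rw [cfc_one ℝ σ hσ.isSelfAdjoint, Matrix.mul_one, ← mul_cfc_eq_cfc_mul hρ] at hself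
  rw [relEntropy, mul_sub, trace_sub, Complex.sub_re, hself,
    re_trace_mul_cfc_eq_sum_nussbaumSzkolaFst hρ hσ, klSum, ← sum_sub_distrib]
  refine sum_congr rfl fun ij _ => ?_
  rw [Pi.one_apply, mul_one]
  by_cases hfst : nussbaumSzkolaFst hρ hσ ij = 0
  · rcases mul_eq_zero.mp hfst with h | h <;> simp [nussbaumSzkolaFst, h]
  · obtain ⟨hl, hw⟩ := mul_ne_zero_iff.mp hfst
    obtain ⟨hm, -⟩ := mul_ne_zero_iff.mp (mt (hac ij) hfst)
    rw [nussbaumSzkolaFst, nussbaumSzkolaSnd, Real.log_mul hl hw, Real.log_mul hm hw]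
    ring

/-- Domination `c • ρ ≤ σ` with some `c > 0` encodes that the support of `ρ` lies in that of `σ`. -/
theorem relEntropy_krausMap_le {m κ : Type*} [Fintype m] [DecidableEq m] [Fintype κ]
    {K : κ → Matrix m n ℂ} (hK : ∑ i, (K i)ᴴ * K i = 1) (hρ : ρ.PosSemidef) {c : ℝ} (hc : 0 < c)
    (hle : (c : ℂ) • ρ ≤ σ) : relEntropy (krausMap K ρ) (krausMap K σ) ≤ relEntropy ρ σ := by
  have hσ : σ.PosSemidef := by
    have hcρ : ((c : ℂ) • ρ).PosSemidef := hρ.smul (Complex.zero_le_real.mpr hc.le)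
    exact (hcρ.nonneg.trans hle).posSemidef
  have hρ' := posSemidef_krausMap K hρ
  have hσ' := posSemidef_krausMap K hσ
  have hle' : (c : ℂ) • krausMap K ρ ≤ krausMap K σ := by
    simpa only [map_smul] using krausMap_mono K hle
  have hac ij := nussbaumSzkolaFst_eq_zero_of_smul_le hρ hσ.1 hc hle (ij := ij)
  have hac' ij := nussbaumSzkolaFst_eq_zero_of_smul_le hρ' hσ'.1 hc hle' (ij := ij)
  rw [relEntropy_eq_klSum hρ'.1 hσ'.1 hac', relEntropy_eq_klSum hρ.1 hσ.1 hac]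
  refine klSum_le_of_resolventSum_le
    (nussbaumSzkolaFst_nonneg hρ hσ.1) (nussbaumSzkolaSnd_nonneg hρ.1 hσ) hac
    (nussbaumSzkolaFst_nonneg hρ' hσ'.1) (nussbaumSzkolaSnd_nonneg hρ'.1 hσ') hac' ?_
    fun s hs => resolventSum_nussbaumSzkola_krausMap_le hK hρ hσ hs
  rw [sum_nussbaumSzkolaFst, sum_nussbaumSzkolaFst, trace_krausMap hK]

end RelativeEntropy

section Holevo

variable {n : Type} [Fintype n] [DecidableEq n] {ι : Type*} [Fintype ι]

lemma vN_eq_neg_re_trace_mul_log {ρ : Matrix n n ℂ} (hρ : ρ.IsHermitian) :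
    vN ρ = -(ρ * cfc Real.log ρ).trace.re := by
  simp only [vN, eigs, dif_pos hρ, Real.negMulLog]
  rw [mul_cfc_eq_cfc_mul hρ, hρ.cfc_eq, IsHermitian.cfc, Unitary.conjStarAlgAut_apply,
    trace_mul_cycle, Unitary.coe_star_mul_self, Matrix.one_mul, trace_diagonal]
  simp

lemma sum_mul_relEntropy (p : ι → ℝ) {ρ : ι → Matrix n n ℂ} (hρ : ∀ j, (ρ j).IsHermitian) :
    ∑ j, p j * relEntropy (ρ j) (∑ l, (p l : ℂ) • ρ l) =
      vN (∑ j, (p j : ℂ) • ρ j) - ∑ j, p j * vN (ρ j) := by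
  set σ := ∑ j, (p j : ℂ) • ρ j with hσ
  have hσ' : σ.IsHermitian := (isSelfAdjoint_sum _ fun j _ =>
    .smul (Complex.conj_ofReal _) (hρ j).isSelfAdjoint).isHermitian
  have hcross : ∑ j, p j * (ρ j * cfc Real.log σ).trace.re = -vN σ := by
    rw [vN_eq_neg_re_trace_mul_log hσ', neg_neg]
    refine Eq.trans ?_ (congrArg (fun X => (X * cfc Real.log σ).trace.re) hσ.symm)
    simp [Matrix.sum_mul, trace_sum]
  have hself (j : ι) : (ρ j * cfc Real.log (ρ j)).trace.re = -vN (ρ j) := by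
    rw [vN_eq_neg_re_trace_mul_log (hρ j), neg_neg]
  simp only [relEntropy, mul_sub, trace_sub, Complex.sub_re, sum_sub_distrib,
    hcross, hself, mul_neg, sum_neg_distrib]
  ring

theorem vN_holevo_monotone_channel_general {m : Type} [Fintype m] [DecidableEq m]
    {κ : Type*} [Fintype κ] {K : κ → Matrix m n ℂ} (hK : ∑ i, (K i)ᴴ * K i = 1)
    {p : ι → ℝ} (hp : ∀ j, 0 ≤ p j) {ρ : ι → Matrix n n ℂ} (hρ : ∀ j, (ρ j).PosSemidef) :
    vN (∑ j, (p j : ℂ) • krausMap K (ρ j)) - ∑ j, p j * vN (krausMap K (ρ j)) ≤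
      vN (∑ j, (p j : ℂ) • ρ j) - ∑ j, p j * vN (ρ j) := by
  rw [← sum_mul_relEntropy p fun j => (hρ j).1,
    ← sum_mul_relEntropy p fun j => (posSemidef_krausMap K (hρ j)).1]
  refine sum_le_sum fun j _ => ?_
  rcases (hp j).eq_or_lt with hj | hj
  · simp [← hj]
  refine mul_le_mul_of_nonneg_left ?_ hj.le
  have hle : (p j : ℂ) • ρ j ≤ ∑ l, (p l : ℂ) • ρ l :=
    single_le_sum (f := fun l => (p l : ℂ) • ρ l)
      (fun l _ => ((hρ l).smul (Complex.zero_le_real.mpr (hp l))).nonneg) (mem_univ j)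
  simpa only [map_sum, map_smul] using relEntropy_krausMap_le hK (hρ j) hj hle

end Holevo

/-- the von Neumann Holevo quantity is monotone under quantum
channels. -/
theorem vN_holevo_monotone_channel
    (n r t k : ℕ) (K : Fin t → Matrix (Fin r) (Fin n) ℂ) (hK : IsKraus K)
    (p : Fin k → ℝ) (ρ : Fin k → Matrix (Fin n) (Fin n) ℂ)
    (hp : ∀ j, 0 ≤ p j) (hps : ∑ j, p j = 1) (hρ : ∀ j, IsDensity (ρ j)) :
    vN (∑ j, (p j : ℂ) • channel K (ρ j)) -
        ∑ j, p j * vN (channel K (ρ j)) ≤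
      vN (∑ j, (p j : ℂ) • ρ j) - ∑ j, p j * vN (ρ j) :=
  vN_holevo_monotone_channel_general hK hp fun j => (hρ j).1
end
end

section
/- The quadratic entropy S_Q is firmly subadditive: for every bipartite density matrix ρ on ℂ^m⊗ℂ^n and every POVM {P_j} on ℂ^m, χ_Q(P, b) ≤ S_Q(ρ_a) + S_Q(ρ_b) − S_Q(ρ), where χ_Q(P, b) = S_Q(ρ_b) − ∑_{j : p_j ≠ 0} p_j S_Q(ρ_{b|j}) with p_j = Tr((P_j ⊗ I) ρ) and ρ_{b|j} = (1/p_j)·Tr_a((P_j ⊗ I) ρ). -/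
open scoped Kronecker
open Finset Matrix
open scoped ComplexOrder

noncomputable section

/-!
The claim is that `S_Q(ρ) - S_Q(ρ_a)`, which equals `‖ρ_a‖ ^ 2 - ‖ρ‖ ^ 2` in the Frobenius norm, is
at most the average entropy of the conditional states. First measure the index of the blocks
`A x y` of a positive semidefinite matrix `A = Tᴴ * T`. Grouping the columns of `T` into blocks
`T x` gives `A x y = (T x)ᴴ * T y`. Since `‖trace (C * C)‖ ≤ ‖C‖ ^ 2` for every square `C`,
`‖trace C‖ ^ 2 - ‖C‖ ^ 2 ≤ ‖trace C ^ 2 - trace (C * C)‖` for `C = A x y`. By the Cauchy–Binet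
formula the right-hand side is half the modulus of the inner product of the vectors of 2 × 2 minors
of `T x` and `T y`, and the squared length of the minors of `T x` is
`2 * (trace (A x x) ^ 2 - ‖A x x‖ ^ 2)`, the entropy of the conditional state `A x x` up to
normalization. Applying the Cauchy–Schwarz inequality to the inner products, and then to the sum of
the lengths over `x`, bounds the sum over all `x` and `y`. Every POVM reduces to a block measurement
by a Naimark dilation: the blocks refine the outcomes, and by concavity of the quadratic entropy
refining can only decrease the average conditional entropy.
-/

section Factorization

open scoped MatrixOrder

theorem exists_eq_conjTranspose_mul_self_of_posSemidef {𝕜 ι : Type*} [RCLike 𝕜] [Fintype ι]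
    {A : Matrix ι ι 𝕜} (hA : A.PosSemidef) : ∃ T : Matrix ι ι 𝕜, A = Tᴴ * T := by
  classical exact CStarAlgebra.nonneg_iff_eq_star_mul_self.mp hA.nonneg

end Factorization

section NaimarkDilation

variable {R X s da db : Type*} [CommSemiring R] [StarRing R] [Fintype X]

theorem conjTranspose_mul_self_kronecker_one_of_isometry [DecidableEq da] [Fintype db]
    [DecidableEq db] {W : Matrix X da R} (hW : Wᴴ * W = 1) :
    (W ⊗ₖ (1 : Matrix db db R))ᴴ * (W ⊗ₖ (1 : Matrix db db R)) = 1 := by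
  rw [conjTranspose_kronecker, ← mul_kronecker_mul, hW, conjTranspose_one, Matrix.one_mul,
    one_kronecker_one]

/-- The matrices `K j` stacked on top of each other. If `∑ j, (K j)ᴴ * K j = 1`, this is the
isometry of the Naimark dilation of the POVM `(K j)ᴴ * K j`. -/
def naimark (K : X → Matrix s da R) : Matrix (X × s) da R :=
  of fun p i => K p.1 p.2 i

theorem conjTranspose_naimark_mul_naimark [Fintype s] (K : X → Matrix s da R) :
    (naimark K)ᴴ * naimark K = ∑ j, (K j)ᴴ * K j := by
  ext
  simp [naimark, mul_apply, Matrix.sum_apply, Fintype.sum_prod_type]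

end NaimarkDilation

section TwoMinors

variable {R ι κ : Type*} [CommRing R]

/-- The matrix whose entry at `((i, j), (a, b))` is the minor
`M i a * M j b - M j a * M i b` of `M`. All pairs of rows and columns are allowed, so that every
2 × 2 minor occurs four times up to sign. -/
def twoMinors (M : Matrix ι κ R) : Matrix (ι × ι) (κ × κ) R :=
  M ⊗ₖ M - (M ⊗ₖ M).submatrix Prod.swap id

variable [Fintype κ]

theorem trace_kronecker_submatrix_swap (A B : Matrix κ κ R) :
    trace ((A ⊗ₖ B).submatrix id Prod.swap) = trace (A * B) := by
  simp [trace, mul_apply, Fintype.sum_prod_type]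

theorem trace_conjTranspose_twoMinors_mul_twoMinors [StarRing R] [Fintype ι]
    (M N : Matrix ι κ R) :
    trace ((twoMinors M)ᴴ * twoMinors N) =
      2 * (trace (Mᴴ * N) ^ 2 - trace (Mᴴ * N * (Mᴴ * N))) := by
  have kronecker_mul : (M ⊗ₖ M)ᴴ * (N ⊗ₖ N) = (Mᴴ * N) ⊗ₖ (Mᴴ * N) := by
    rw [conjTranspose_kronecker, mul_kronecker_mul]
  have swap_swap : ((M ⊗ₖ M).submatrix Prod.swap id)ᴴ * (N ⊗ₖ N).submatrix Prod.swap id =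
      (M ⊗ₖ M)ᴴ * (N ⊗ₖ N) := by
    rw [conjTranspose_submatrix]
    exact submatrix_mul_equiv _ _ _ (Equiv.prodComm ι ι) _
  have id_swap : (M ⊗ₖ M)ᴴ * (N ⊗ₖ N).submatrix Prod.swap id =
      ((M ⊗ₖ M)ᴴ * (N ⊗ₖ N)).submatrix id Prod.swap := by
    ext p q
    simp [mul_apply, mul_comm]
  have swap_id : ((M ⊗ₖ M).submatrix Prod.swap id)ᴴ * (N ⊗ₖ N) =
      (M ⊗ₖ M)ᴴ * (N ⊗ₖ N).submatrix Prod.swap id := by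
    rw [conjTranspose_submatrix]
    exact submatrix_mul_equiv (M ⊗ₖ M)ᴴ ((N ⊗ₖ N).submatrix Prod.swap id) id
      (Equiv.prodComm ι ι) id
  simp only [twoMinors, conjTranspose_sub, Matrix.sub_mul, Matrix.mul_sub, trace_sub, swap_swap,
    swap_id, id_swap, kronecker_mul, trace_kronecker, trace_kronecker_submatrix_swap]
  ring

end TwoMinors

section Frobenius

attribute [local instance] Matrix.frobeniusNormedAddCommGroup Matrix.frobeniusNormedSpace

variable {𝕜 ι κ : Type*} [RCLike 𝕜] [Fintype ι] [Fintype κ]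

theorem frobenius_norm_sq (A : Matrix ι κ 𝕜) : ‖A‖ ^ 2 = ∑ i, ∑ j, ‖A i j‖ ^ 2 := by
  rw [frobenius_norm_def, ← Real.sqrt_eq_rpow, Real.sq_sqrt (by positivity)]
  simp only [Real.rpow_two]

theorem trace_conjTranspose_mul_self_eq_norm_sq (A : Matrix ι κ 𝕜) :
    trace (Aᴴ * A) = ((‖A‖ ^ 2 : ℝ) : 𝕜) := by
  rw [frobenius_norm_sq, sum_comm]
  simp [trace, mul_apply, RCLike.star_def, RCLike.conj_mul]

theorem re_trace_conjTranspose_mul_self (A : Matrix ι κ ℂ) : (trace (Aᴴ * A)).re = ‖A‖ ^ 2 := by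
  rw [trace_conjTranspose_mul_self_eq_norm_sq, RCLike.ofReal_eq_complex_ofReal, Complex.ofReal_re]

theorem norm_trace_conjTranspose_mul_le (A B : Matrix ι κ 𝕜) :
    ‖trace (Aᴴ * B)‖ ≤ ‖A‖ * ‖B‖ := by
  let vec (C : Matrix ι κ 𝕜) : EuclideanSpace 𝕜 (ι × κ) := WithLp.toLp 2 fun p => C p.1 p.2
  have norm_vec (C : Matrix ι κ 𝕜) : ‖vec C‖ = ‖C‖ := by
    rw [← sq_eq_sq₀ (norm_nonneg _) (norm_nonneg _), EuclideanSpace.norm_sq_eq,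
      frobenius_norm_sq, Fintype.sum_prod_type]
  have inner_vec : inner 𝕜 (vec A) (vec B) = trace (Aᴴ * B) := by
    simp only [vec, PiLp.inner_apply, RCLike.inner_apply', Fintype.sum_prod_type, trace, diag_apply,
      mul_apply, conjTranspose_apply, RCLike.star_def]
    exact sum_comm
  rw [← inner_vec, ← norm_vec A, ← norm_vec B]
  exact norm_inner_le_norm _ _

theorem norm_trace_mul_self_le (A : Matrix ι ι 𝕜) : ‖trace (A * A)‖ ≤ ‖A‖ ^ 2 := by
  simpa [frobenius_norm_conjTranspose, sq] using norm_trace_conjTranspose_mul_le Aᴴ A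

theorem frobenius_norm_conj_of_isometry [DecidableEq κ] {W : Matrix ι κ 𝕜} (hW : Wᴴ * W = 1)
    (A : Matrix κ κ 𝕜) : ‖W * A * Wᴴ‖ = ‖A‖ := by
  have gram : (W * A * Wᴴ)ᴴ * (W * A * Wᴴ) = W * (Aᴴ * (Wᴴ * W) * A * Wᴴ) := by
    simp only [conjTranspose_mul, conjTranspose_conjTranspose, Matrix.mul_assoc]
  rw [← sq_eq_sq₀ (norm_nonneg _) (norm_nonneg _), ← RCLike.ofReal_inj (K := 𝕜),
    ← trace_conjTranspose_mul_self_eq_norm_sq, ← trace_conjTranspose_mul_self_eq_norm_sq, gram,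
    trace_mul_comm, hW, Matrix.mul_one, Matrix.mul_assoc, hW, Matrix.mul_one]

theorem frobenius_norm_twoMinors_sq (M : Matrix ι κ 𝕜) :
    ‖twoMinors M‖ ^ 2 = 2 * ((‖M‖ ^ 2) ^ 2 - ‖Mᴴ * M‖ ^ 2) := by
  have h := trace_conjTranspose_twoMinors_mul_twoMinors M M
  have hherm : trace (Mᴴ * M * (Mᴴ * M)) = ((‖Mᴴ * M‖ ^ 2 : ℝ) : 𝕜) := by
    rw [← trace_conjTranspose_mul_self_eq_norm_sq, (isHermitian_conjTranspose_mul_self M).eq]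
  rw [hherm, trace_conjTranspose_mul_self_eq_norm_sq,
    trace_conjTranspose_mul_self_eq_norm_sq] at h
  exact_mod_cast h

theorem norm_trace_sq_sub_norm_sq_le (M N : Matrix ι κ 𝕜) :
    ‖trace (Mᴴ * N)‖ ^ 2 - ‖Mᴴ * N‖ ^ 2 ≤ ‖twoMinors M‖ * ‖twoMinors N‖ / 2 := by
  have hminors : 2 * ‖trace (Mᴴ * N) ^ 2 - trace (Mᴴ * N * (Mᴴ * N))‖ ≤
      ‖twoMinors M‖ * ‖twoMinors N‖ := by
    simpa [trace_conjTranspose_twoMinors_mul_twoMinors] using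
      norm_trace_conjTranspose_mul_le (twoMinors M) (twoMinors N)
  calc ‖trace (Mᴴ * N)‖ ^ 2 - ‖Mᴴ * N‖ ^ 2
      ≤ ‖trace (Mᴴ * N) ^ 2‖ - ‖trace (Mᴴ * N * (Mᴴ * N))‖ := by
        rw [norm_pow]
        exact sub_le_sub_left (norm_trace_mul_self_le _) _
    _ ≤ ‖trace (Mᴴ * N) ^ 2 - trace (Mᴴ * N * (Mᴴ * N))‖ := norm_sub_norm_le _ _
    _ ≤ ‖twoMinors M‖ * ‖twoMinors N‖ / 2 := by linarith

end Frobenius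

section HomogeneousEntropy

attribute [local instance] Matrix.frobeniusNormedAddCommGroup Matrix.frobeniusNormedSpace

variable {d : Type} [Fintype d]

/-- The quadratic entropy extended homogeneously to unnormalized states: the state `A` of
probability `p = Tr A` is assigned `p * S_Q(A / p)`, which is `0` when `p = 0`. -/
def homSQ (A : Matrix d d ℂ) : ℝ :=
  A.trace.re * SQ (((A.trace.re)⁻¹ : ℝ) • A)

theorem SQ_eq_one_sub_norm_sq {A : Matrix d d ℂ} (hA : A.IsHermitian) : SQ A = 1 - ‖A‖ ^ 2 := by
  rw [SQ, ← re_trace_conjTranspose_mul_self, hA.eq]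

theorem homSQ_eq_re_trace_sub {A : Matrix d d ℂ} (hA : A.IsHermitian) :
    homSQ A = A.trace.re - ‖A‖ ^ 2 / A.trace.re := by
  have hsmul : (((A.trace.re)⁻¹ : ℝ) • A).IsHermitian := by
    rw [IsHermitian, conjTranspose_smul, hA.eq, star_trivial]
  rw [homSQ, SQ_eq_one_sub_norm_sq hsmul, norm_smul, mul_pow, norm_inv, Real.norm_eq_abs, inv_pow,
    sq_abs]
  rcases eq_or_ne A.trace.re 0 with h | h
  · simp [h]
  · field_simp

theorem re_trace_nonneg_of_posSemidef {A : Matrix d d ℂ} (hA : A.PosSemidef) : 0 ≤ A.trace.re :=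
  (Complex.nonneg_iff.mp hA.trace_nonneg).1

theorem frobenius_norm_le_re_trace_of_posSemidef {A : Matrix d d ℂ} (hA : A.PosSemidef) :
    ‖A‖ ≤ A.trace.re := by
  obtain ⟨T, rfl⟩ := exists_eq_conjTranspose_mul_self_of_posSemidef hA
  rw [re_trace_conjTranspose_mul_self, sq]
  exact (frobenius_norm_mul _ _).trans_eq (by rw [frobenius_norm_conjTranspose])

theorem frobenius_norm_sq_div_re_trace_mul_re_trace {A : Matrix d d ℂ} (hA : A.PosSemidef) :
    ‖A‖ ^ 2 / A.trace.re * A.trace.re = ‖A‖ ^ 2 :=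
  div_mul_cancel_of_imp fun h => by
    rw [(norm_nonneg A).antisymm' (h ▸ frobenius_norm_le_re_trace_of_posSemidef hA),
      zero_pow two_ne_zero]

theorem homSQ_mul_re_trace {A : Matrix d d ℂ} (hA : A.PosSemidef) :
    homSQ A * A.trace.re = A.trace.re ^ 2 - ‖A‖ ^ 2 := by
  rw [homSQ_eq_re_trace_sub hA.isHermitian, sub_mul,
    frobenius_norm_sq_div_re_trace_mul_re_trace hA, sq A.trace.re]

theorem homSQ_nonneg {A : Matrix d d ℂ} (hA : A.PosSemidef) : 0 ≤ homSQ A := by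
  rw [homSQ_eq_re_trace_sub hA.isHermitian, sub_nonneg]
  refine div_le_of_le_mul₀ (re_trace_nonneg_of_posSemidef hA) (re_trace_nonneg_of_posSemidef hA) ?_
  rw [← sq]
  gcongr
  exact frobenius_norm_le_re_trace_of_posSemidef hA

theorem sum_homSQ_le_homSQ_sum {X : Type*} [Fintype X] {A : X → Matrix d d ℂ}
    (hA : ∀ x, (A x).PosSemidef) : ∑ x, homSQ (A x) ≤ homSQ (∑ x, A x) := by
  have htrace (x : X) : 0 ≤ (A x).trace.re := re_trace_nonneg_of_posSemidef (hA x)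
  have hquot (x : X) : 0 ≤ ‖A x‖ ^ 2 / (A x).trace.re := div_nonneg (sq_nonneg _) (htrace x)
  have hsedrakyan : ‖∑ x, A x‖ ^ 2 / ∑ x, (A x).trace.re ≤ ∑ x, ‖A x‖ ^ 2 / (A x).trace.re := by
    refine div_le_of_le_mul₀ (sum_nonneg fun x _ => htrace x) (sum_nonneg fun x _ => hquot x) ?_
    calc ‖∑ x, A x‖ ^ 2 ≤ (∑ x, ‖A x‖) ^ 2 := by
          gcongr
          exact norm_sum_le _ _
      _ ≤ (∑ x, ‖A x‖ ^ 2 / (A x).trace.re) * ∑ x, (A x).trace.re :=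
          sum_sq_le_sum_mul_sum_of_sq_le_mul _ (fun x _ => hquot x) (fun x _ => htrace x)
            fun x _ => (frobenius_norm_sq_div_re_trace_mul_re_trace (hA x)).ge
  have hsum : (∑ x, A x).IsHermitian := (posSemidef_sum _ fun x _ => hA x).isHermitian
  rw [homSQ_eq_re_trace_sub hsum, trace_sum, Complex.re_sum,
    sum_congr rfl fun x _ => homSQ_eq_re_trace_sub (hA x).isHermitian, sum_sub_distrib]
  exact sub_le_sub_left hsedrakyan _

end HomogeneousEntropy

section Blocks

attribute [local instance] Matrix.frobeniusNormedAddCommGroup Matrix.frobeniusNormedSpace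

variable {X b : Type}

/-- The block at `(x, y)` of a matrix on a product index type, blocks being labelled by the first
factor. For `A = (W ⊗ I) ρ (W ⊗ I)ᴴ` the block at `(x, x)` is the unnormalized state of the second
factor after outcome `x`. -/
def block (A : Matrix (X × b) (X × b) ℂ) (x y : X) : Matrix b b ℂ :=
  A.submatrix (Prod.mk x) (Prod.mk y)

theorem trA_eq_sum_block [Fintype X] (A : Matrix (X × b) (X × b) ℂ) :
    trA A = ∑ x, block A x x := by
  ext
  simp [trA, block, Matrix.sum_apply]

variable [Fintype b]

theorem trB_apply_eq_trace_block (A : Matrix (X × b) (X × b) ℂ) (x y : X) :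
    trB A x y = trace (block A x y) :=
  rfl

theorem trB_isHermitian {A : Matrix (X × b) (X × b) ℂ} (hA : A.IsHermitian) :
    (trB A).IsHermitian := by
  ext x y
  simp only [trB, conjTranspose_apply, of_apply, star_sum, hA.apply]

variable [Fintype X]

theorem trace_trA (A : Matrix (X × b) (X × b) ℂ) : trace (trA A) = trace A := by
  rw [trA_eq_sum_block, trace_sum, trace, Fintype.sum_prod_type]
  rfl

theorem frobenius_norm_sq_eq_sum_block (A : Matrix (X × b) (X × b) ℂ) :
    ‖A‖ ^ 2 = ∑ x, ∑ y, ‖block A x y‖ ^ 2 := by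
  simp only [frobenius_norm_sq, Fintype.sum_prod_type, block, submatrix_apply]
  exact sum_congr rfl fun x _ => sum_comm

theorem norm_trB_sq_sub_norm_sq_le {A : Matrix (X × b) (X × b) ℂ} (hA : A.PosSemidef) :
    ‖trB A‖ ^ 2 - ‖A‖ ^ 2 ≤ A.trace.re * ∑ x, homSQ (block A x x) := by
  obtain ⟨T, hT⟩ := exists_eq_conjTranspose_mul_self_of_posSemidef hA
  let columns (x : X) : Matrix (X × b) b ℂ := T.submatrix id (Prod.mk x)
  have hblock (x y : X) : block A x y = (columns x)ᴴ * columns y := by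
    rw [hT]
    rfl
  have hpos (x : X) : (block A x x).PosSemidef := hA.submatrix _
  have hminors (x : X) :
      ‖twoMinors (columns x)‖ ^ 2 = homSQ (block A x x) * (2 * (block A x x).trace.re) := by
    rw [mul_left_comm, homSQ_mul_re_trace (hpos x), frobenius_norm_twoMinors_sq, hblock,
      re_trace_conjTranspose_mul_self]
  have htrace : A.trace.re = ∑ x, (block A x x).trace.re := by
    rw [← trace_trA, trA_eq_sum_block, trace_sum, Complex.re_sum]
  calc ‖trB A‖ ^ 2 - ‖A‖ ^ 2
      = ∑ x, ∑ y, (‖trace (block A x y)‖ ^ 2 - ‖block A x y‖ ^ 2) := by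
        simp only [frobenius_norm_sq (trB A), trB_apply_eq_trace_block,
          frobenius_norm_sq_eq_sum_block A, sum_sub_distrib]
    _ ≤ ∑ x, ∑ y, ‖twoMinors (columns x)‖ * ‖twoMinors (columns y)‖ / 2 := by
        simp only [hblock]
        gcongr with x _ y _
        exact norm_trace_sq_sub_norm_sq_le _ _
    _ = (∑ x, ‖twoMinors (columns x)‖) ^ 2 / 2 := by
        simp only [sq, sum_mul_sum, sum_div]
    _ ≤ (∑ x, homSQ (block A x x)) * (∑ x, 2 * (block A x x).trace.re) / 2 := by
        gcongr
        exact sum_sq_le_sum_mul_sum_of_sq_le_mul _ (fun x _ => homSQ_nonneg (hpos x))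
          (fun x _ => mul_nonneg zero_le_two (re_trace_nonneg_of_posSemidef (hpos x)))
          fun x _ => (hminors x).le
    _ = A.trace.re * ∑ x, homSQ (block A x x) := by
        rw [htrace, ← mul_sum]
        ring

end Blocks

section Measurement

attribute [local instance] Matrix.frobeniusNormedAddCommGroup Matrix.frobeniusNormedSpace

variable {X s da db : Type} [Fintype da] [Fintype db] [DecidableEq db]

/-- The state `(W ⊗ I) ρ (W ⊗ I)ᴴ` obtained by applying `W` to the first factor of `ρ`. -/
def conjA (W : Matrix X da ℂ) (ρ : Matrix (da × db) (da × db) ℂ) : Matrix (X × db) (X × db) ℂ :=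
  (W ⊗ₖ (1 : Matrix db db ℂ)) * ρ * (W ⊗ₖ (1 : Matrix db db ℂ))ᴴ

theorem conjA_apply (W : Matrix X da ℂ) (ρ : Matrix (da × db) (da × db) ℂ) (x y : X) (b c : db) :
    conjA W ρ (x, b) (y, c) = ∑ j, (∑ i, W x i * ρ (i, b) (j, c)) * star (W y j) := by
  simp [conjA, mul_apply, Fintype.sum_prod_type, one_apply, apply_ite]

theorem trB_conjA (W : Matrix X da ℂ) (ρ : Matrix (da × db) (da × db) ℂ) :
    trB (conjA W ρ) = W * trB ρ * Wᴴ := by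
  ext x y
  simp only [trB, of_apply, conjA_apply, mul_apply, conjTranspose_apply, sum_mul, mul_sum]
  rw [sum_comm]
  exact sum_congr rfl fun j _ => sum_comm

theorem posSemidef_conjA [Finite X] {ρ : Matrix (da × db) (da × db) ℂ} (hρ : ρ.PosSemidef)
    (W : Matrix X da ℂ) : (conjA W ρ).PosSemidef :=
  hρ.mul_mul_conjTranspose_same _

theorem trA_conjTranspose_mul_self_kronecker_one_mul [Fintype X] (K : Matrix X da ℂ)
    (ρ : Matrix (da × db) (da × db) ℂ) :
    trA (((Kᴴ * K) ⊗ₖ (1 : Matrix db db ℂ)) * ρ) = trA (conjA K ρ) := by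
  ext b c
  simp only [trA, of_apply, conjA_apply, mul_apply, kroneckerMap_apply, Fintype.sum_prod_type,
    one_apply, mul_ite, mul_one, mul_zero, ite_mul, zero_mul, sum_ite_eq, mem_univ, if_true,
    conjTranspose_apply, sum_mul]
  rw [sum_comm (s := (univ : Finset X))]
  refine sum_congr rfl fun i _ => ?_
  rw [sum_comm]
  exact sum_congr rfl fun x _ => sum_congr rfl fun j _ => by ring

section Isometry

variable [DecidableEq da] {W : Matrix X da ℂ} [Fintype X]

theorem frobenius_norm_conjA_of_isometry (hW : Wᴴ * W = 1) (ρ : Matrix (da × db) (da × db) ℂ) :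
    ‖conjA W ρ‖ = ‖ρ‖ :=
  frobenius_norm_conj_of_isometry (conjTranspose_mul_self_kronecker_one_of_isometry hW) ρ

theorem frobenius_norm_trB_conjA_of_isometry (hW : Wᴴ * W = 1)
    (ρ : Matrix (da × db) (da × db) ℂ) : ‖trB (conjA W ρ)‖ = ‖trB ρ‖ := by
  rw [trB_conjA, frobenius_norm_conj_of_isometry hW]

theorem trace_conjA_of_isometry (hW : Wᴴ * W = 1) (ρ : Matrix (da × db) (da × db) ℂ) :
    trace (conjA W ρ) = trace ρ := by
  rw [conjA, trace_mul_comm, ← Matrix.mul_assoc,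
    conjTranspose_mul_self_kronecker_one_of_isometry hW, Matrix.one_mul]

end Isometry

theorem sum_block_conjA_naimark [Fintype s] (K : X → Matrix s da ℂ)
    (ρ : Matrix (da × db) (da × db) ℂ) (j : X) :
    ∑ t, block (conjA (naimark K) ρ) (j, t) (j, t) = trA (conjA (K j) ρ) := by
  rw [trA_eq_sum_block]
  refine sum_congr rfl fun t _ => ?_
  ext
  simp only [block, submatrix_apply, conjA_apply, naimark, of_apply]

theorem norm_trB_sq_sub_norm_sq_le_sum_homSQ [Fintype X] [Fintype s] [DecidableEq da]
    {K : X → Matrix s da ℂ} (hK : ∑ j, (K j)ᴴ * K j = 1)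
    {ρ : Matrix (da × db) (da × db) ℂ} (hρ : ρ.PosSemidef) :
    ‖trB ρ‖ ^ 2 - ‖ρ‖ ^ 2 ≤ ρ.trace.re * ∑ j, homSQ (trA (conjA (K j) ρ)) := by
  have hW : (naimark K)ᴴ * naimark K = 1 := (conjTranspose_naimark_mul_naimark K).trans hK
  have hpos := posSemidef_conjA hρ (naimark K)
  have htrace : 0 ≤ ρ.trace.re := re_trace_nonneg_of_posSemidef hρ
  calc ‖trB ρ‖ ^ 2 - ‖ρ‖ ^ 2
      = ‖trB (conjA (naimark K) ρ)‖ ^ 2 - ‖conjA (naimark K) ρ‖ ^ 2 := by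
        rw [frobenius_norm_trB_conjA_of_isometry hW, frobenius_norm_conjA_of_isometry hW]
    _ ≤ ρ.trace.re * ∑ j, ∑ t, homSQ (block (conjA (naimark K) ρ) (j, t) (j, t)) := by
        rw [← trace_conjA_of_isometry hW, ← Fintype.sum_prod_type']
        exact norm_trB_sq_sub_norm_sq_le hpos
    _ ≤ ρ.trace.re * ∑ j, homSQ (trA (conjA (K j) ρ)) := by
        gcongr with j
        rw [← sum_block_conjA_naimark]
        exact sum_homSQ_le_homSQ_sum fun t => hpos.submatrix _

variable [DecidableEq da]

theorem prob_mul_SQ_condB (P : Matrix da da ℂ) (ρ : Matrix (da × db) (da × db) ℂ) :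
    prob P ρ * SQ (condB P ρ) = homSQ (trA ((P ⊗ₖ (1 : Matrix db db ℂ)) * ρ)) := by
  rw [homSQ, trace_trA]
  rfl

theorem holevoB_SQF_eq_sub_sum_homSQ {k : ℕ} (P : Fin k → Matrix da da ℂ)
    (ρ : Matrix (da × db) (da × db) ℂ) :
    holevoB SQF P ρ =
      SQ (trA ρ) - ∑ j, homSQ (trA ((P j ⊗ₖ (1 : Matrix db db ℂ)) * ρ)) := by
  simp only [← prob_mul_SQ_condB]
  exact congrArg _ (sum_filter_of_ne fun j _ h => left_ne_zero_of_mul h)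

theorem quadratic_firm_subadditivity_general {k : ℕ} {ρ : Matrix (da × db) (da × db) ℂ}
    (hρ : ρ.PosSemidef) (htrace : ρ.trace.re ≤ 1) {P : Fin k → Matrix da da ℂ} (hP : IsPOVM P) :
    holevoB SQF P ρ ≤ SQ (trB ρ) + SQ (trA ρ) - SQ ρ := by
  choose K hK using fun j => exists_eq_conjTranspose_mul_self_of_posSemidef (hP.1 j)
  have hsum : ∑ j, (K j)ᴴ * K j = 1 := by simp only [← hK, hP.2]
  have hnonneg : 0 ≤ ∑ j, homSQ (trA (conjA (K j) ρ)) :=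
    sum_nonneg fun j _ => homSQ_nonneg <| by
      rw [trA_eq_sum_block]
      exact posSemidef_sum _ fun x _ => (posSemidef_conjA hρ _).submatrix _
  have hmain : ‖trB ρ‖ ^ 2 - ‖ρ‖ ^ 2 ≤ ∑ j, homSQ (trA (conjA (K j) ρ)) :=
    (norm_trB_sq_sub_norm_sq_le_sum_homSQ hsum hρ).trans (mul_le_of_le_one_left hnonneg htrace)
  simp only [holevoB_SQF_eq_sub_sum_homSQ, hK, trA_conjTranspose_mul_self_kronecker_one_mul]
  rw [SQ_eq_one_sub_norm_sq (trB_isHermitian hρ.isHermitian), SQ_eq_one_sub_norm_sq hρ.isHermitian]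
  linarith

end Measurement

/-- the quadratic entropy is firmly subadditive. -/
theorem quadratic_firm_subadditivity
    (m n k : ℕ) (ρ : Matrix (Fin m × Fin n) (Fin m × Fin n) ℂ) (hρ : IsDensity ρ)
    (P : Fin k → Matrix (Fin m) (Fin m) ℂ) (hP : IsPOVM P) :
    holevoB SQF P ρ ≤ SQ (trB ρ) + SQ (trA ρ) - SQ ρ := by
  exact quadratic_firm_subadditivity_general hρ.1 (by simp [hρ.2]) hP
end
end
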